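/- arXiv:2405.08412 — 2 statements merged into one kernel-verified Lean document; each statement's English description precedes it below -/
import Mathlib

section
/- Let X and Y be reflexive Banach spaces, Z a normed vector space, and T : X × Y → Z a continuous bilinear operator. Suppose that for every pair of sequences {x_n} ⊂ X and {y_n} ⊂ Y such that {x_n} converges weakly in X, {y_n} converges weakly in Y, and at least one of {x_n} or {y_n} converges weakly to 0, the sequence {T(x_n, y_n)} converges strongly to 0 in Z. Then T is compact. -/
open Filter Topology Metric NormedSpace

/-- A sequence converges weakly to a point in a normed space. -/
def WeaklyConvergesTo {𝕜 X : Type*} [NontriviallyNormedField 𝕜] [NormedAddCommGroup X]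
    [NormedSpace 𝕜 X] (x : ℕ → X) (x₀ : X) : Prop :=
  ∀ f : X →L[𝕜] 𝕜, Tendsto (fun n => f (x n)) atTop (𝓝 (f x₀))

/-- A bilinear operator is compact if the closure of the image of the product of the
closed unit balls is compact. -/
def IsCompactBilinear {X Y Z : Type*} [NormedAddCommGroup X] [NormedSpace ℝ X]
    [NormedAddCommGroup Y] [NormedSpace ℝ Y] [NormedAddCommGroup Z] [NormedSpace ℝ Z]
    (T : X →L[ℝ] Y →L[ℝ] Z) : Prop :=
  IsCompact (closure (Set.image2 (fun x y => T x y)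
    (closedBall (0 : X) 1) (closedBall (0 : Y) 1)))

/-!
Bilinearity gives `T xₙ yₙ - T x₀ y₀ = T (xₙ - x₀) yₙ + T x₀ (yₙ - y₀)`, and in each summand on the
right one argument is weakly null, so `T` maps weakly convergent pairs of sequences to convergent
sequences. Weakly compact sets are weakly sequentially compact by Šmulian's theorem, hence `T` maps
products of weakly compact sets to compact sets. The closed balls of a reflexive space are weakly
compact by the Banach–Alaoglu theorem in the bidual.
-/

section NontriviallyNormedField

variable {𝕜 X : Type*} [NontriviallyNormedField 𝕜] [NormedAddCommGroup X] [NormedSpace 𝕜 X]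

theorem continuous_strongDual_toWeakSpace_symm (f : StrongDual 𝕜 X) :
    Continuous fun x : WeakSpace 𝕜 X => f ((toWeakSpace 𝕜 X).symm x) :=
  WeakBilin.eval_continuous (topDualPairing 𝕜 X).flip f

theorem weaklyConvergesTo_of_tendsto_toWeakSpace {x : ℕ → X} {x₀ : X}
    (hx : Tendsto (fun n => toWeakSpace 𝕜 X (x n)) atTop (𝓝 (toWeakSpace 𝕜 X x₀))) :
    WeaklyConvergesTo (𝕜 := 𝕜) x x₀ := fun f =>
  ((continuous_strongDual_toWeakSpace_symm f).tendsto _).comp hx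

namespace WeaklyConvergesTo

theorem const (x₀ : X) : WeaklyConvergesTo (𝕜 := 𝕜) (fun _ => x₀) x₀ :=
  fun _ => tendsto_const_nhds

theorem comp_strictMono {x : ℕ → X} {x₀ : X} (hx : WeaklyConvergesTo (𝕜 := 𝕜) x x₀)
    {φ : ℕ → ℕ} (hφ : StrictMono φ) : WeaklyConvergesTo (𝕜 := 𝕜) (x ∘ φ) x₀ :=
  fun f => (hx f).comp hφ.tendsto_atTop

theorem sub_limit {x : ℕ → X} {x₀ : X} (hx : WeaklyConvergesTo (𝕜 := 𝕜) x x₀) :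
    WeaklyConvergesTo (𝕜 := 𝕜) (fun n => x n - x₀) 0 :=
  fun f => by simpa using (hx f).sub_const (f x₀)

theorem tendsto_bilinear {Y Z : Type*} [NormedAddCommGroup Y] [NormedSpace 𝕜 Y]
    [AddCommGroup Z] [Module 𝕜 Z] [TopologicalSpace Z] [ContinuousAdd Z]
    {T : X →ₗ[𝕜] Y →ₗ[𝕜] Z}
    (hT : ∀ (x : ℕ → X) (y : ℕ → Y) (x₀ : X) (y₀ : Y),
      WeaklyConvergesTo (𝕜 := 𝕜) x x₀ → WeaklyConvergesTo (𝕜 := 𝕜) y y₀ →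
      (x₀ = 0 ∨ y₀ = 0) → Tendsto (fun n => T (x n) (y n)) atTop (𝓝 0))
    {x : ℕ → X} {y : ℕ → Y} {x₀ : X} {y₀ : Y}
    (hx : WeaklyConvergesTo (𝕜 := 𝕜) x x₀) (hy : WeaklyConvergesTo (𝕜 := 𝕜) y y₀) :
    Tendsto (fun n => T (x n) (y n)) atTop (𝓝 (T x₀ y₀)) := by
  have hleft : Tendsto (fun n => T (x n - x₀) (y n)) atTop (𝓝 0) :=
    hT _ _ 0 y₀ hx.sub_limit hy (.inl rfl)
  have hright : Tendsto (fun n => T x₀ (y n - y₀)) atTop (𝓝 0) :=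
    hT _ _ x₀ 0 (const x₀) hy.sub_limit (.inr rfl)
  have hdecomp (n : ℕ) : T (x n - x₀) (y n) + T x₀ (y n - y₀) + T x₀ y₀ = T (x n) (y n) := by
    simp
  simpa only [hdecomp, zero_add] using (hleft.add hright).add_const (T x₀ y₀)

end WeaklyConvergesTo

end NontriviallyNormedField

section RCLike

open TopologicalSpace

variable {𝕜 X : Type*} [RCLike 𝕜] [NormedAddCommGroup X] [NormedSpace 𝕜 X]

variable (𝕜) in
theorem exists_seq_strongDual_eq_zero_of_isSeparable {s : Set X} (hs : IsSeparable s) :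
    ∃ g : ℕ → StrongDual 𝕜 X, ∀ x ∈ s, (∀ k, g k x = 0) → x = 0 := by
  obtain rfl | hne := s.eq_empty_or_nonempty
  · exact ⟨0, by simp⟩
  obtain ⟨c, hc, hsc⟩ := hs
  obtain ⟨d, rfl⟩ := hc.exists_eq_range (closure_nonempty_iff.1 (hne.mono hsc))
  choose g hg_norm hg_apply using fun k => exists_dual_vector'' 𝕜 (d k)
  refine ⟨g, fun x hx hgx => norm_le_zero_iff.1 (le_of_forall_pos_lt_add fun ε hε => ?_)⟩
  obtain ⟨_, ⟨k, rfl⟩, hk⟩ := Metric.mem_closure_iff.1 (hsc hx) (ε / 2) (half_pos hε)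
  rw [dist_eq_norm] at hk
  have hd_norm : ‖d k‖ ≤ ‖x - d k‖ := by
    calc ‖d k‖ = ‖g k (x - d k)‖ := by simp [hgx k, hg_apply k]
      _ ≤ 1 * ‖x - d k‖ := (g k).le_of_opNorm_le (hg_norm k) _
      _ = ‖x - d k‖ := one_mul _
  calc ‖x‖ ≤ ‖x - d k‖ + ‖d k‖ := norm_le_norm_sub_add x (d k)
    _ < 0 + ε := by linarith

theorem isClosed_toWeakSpace_image_submodule {M : Submodule 𝕜 X} (hM : IsClosed (M : Set X)) :
    IsClosed (toWeakSpace 𝕜 X '' M) := by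
  let _ : NormedSpace ℝ X := NormedSpace.restrictScalars ℝ 𝕜 X
  have _ : IsScalarTower ℝ 𝕜 X := RestrictScalars.isScalarTower ℝ 𝕜 X
  have hconvex : Convex ℝ (M : Set X) := (M.restrictScalars ℝ).convex
  rw [← hM.closure_eq, hconvex.toWeakSpace_closure 𝕜]
  exact isClosed_closure

theorem metrizableSpace_of_isCompact_weakSpace_of_isSeparable {K : Set (WeakSpace 𝕜 X)}
    (hK : IsCompact K) (hK_sep : IsSeparable (toWeakSpace 𝕜 X ⁻¹' K)) : MetrizableSpace K := by
  have : CompactSpace K := isCompact_iff_compactSpace.1 hK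
  obtain ⟨g, hg⟩ := exists_seq_strongDual_eq_zero_of_isSeparable 𝕜
    ((hK_sep.prod hK_sep).image continuous_sub)
  refine Metric.PiNatEmbed.TopologicalSpace.MetrizableSpace.of_countable_separating
    (fun k (x : K) => g k ((toWeakSpace 𝕜 X).symm x))
    (fun k => (continuous_strongDual_toWeakSpace_symm (g k)).comp continuous_subtype_val)
    fun x y hxy => ?_
  contrapose! hxy
  have hsub : (toWeakSpace 𝕜 X).symm x - (toWeakSpace 𝕜 X).symm y = 0 :=
    hg _ ⟨(_, _), ⟨x.2, y.2⟩, rfl⟩ fun k => by rw [map_sub, hxy k, sub_self]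
  exact Subtype.ext ((toWeakSpace 𝕜 X).symm.injective (sub_eq_zero.1 hsub))

/-- Šmulian's half of the Eberlein–Šmulian theorem. A sequence lives in its closed linear span,
which is separable and weakly closed, so it suffices to work in a metrizable part of `K`. -/
theorem isSeqCompact_weakSpace_of_isCompact {K : Set (WeakSpace 𝕜 X)} (hK : IsCompact K) :
    IsSeqCompact K := by
  intro x hx
  let M := (Submodule.span 𝕜 (Set.range ((toWeakSpace 𝕜 X).symm ∘ x))).topologicalClosure
  have hM_sep : IsSeparable (M : Set X) :=
    ((Set.countable_range _).isSeparable.span (R := 𝕜)).closure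
  have hxM (n : ℕ) : x n ∈ toWeakSpace 𝕜 X '' M :=
    ⟨_, Submodule.le_topologicalClosure _ (Submodule.subset_span ⟨n, rfl⟩), rfl⟩
  have hKM : IsCompact (K ∩ toWeakSpace 𝕜 X '' M) :=
    hK.inter_right (isClosed_toWeakSpace_image_submodule (Submodule.isClosed_topologicalClosure _))
  have : CompactSpace ↥(K ∩ toWeakSpace 𝕜 X '' M) := isCompact_iff_compactSpace.1 hKM
  have : MetrizableSpace ↥(K ∩ toWeakSpace 𝕜 X '' M) :=
    metrizableSpace_of_isCompact_weakSpace_of_isSeparable hKM <| hM_sep.mono fun _ hx => by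
      simpa using hx.2
  obtain ⟨a, φ, hφ, ha⟩ := SeqCompactSpace.tendsto_subseq
    fun n => (⟨x n, hx n, hxM n⟩ : ↥(K ∩ toWeakSpace 𝕜 X '' M))
  exact ⟨a, a.2.1, φ, hφ, (continuous_subtype_val.tendsto a).comp ha⟩

theorem exists_weaklyConvergesTo_subseq {s : Set X} (hs : IsCompact (toWeakSpace 𝕜 X '' s))
    {x : ℕ → X} (hx : ∀ n, x n ∈ s) :
    ∃ x₀ ∈ s, ∃ φ : ℕ → ℕ, StrictMono φ ∧ WeaklyConvergesTo (𝕜 := 𝕜) (x ∘ φ) x₀ := by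
  obtain ⟨_, ⟨x₀, hx₀, rfl⟩, φ, hφ, hlim⟩ :=
    isSeqCompact_weakSpace_of_isCompact hs fun n => Set.mem_image_of_mem _ (hx n)
  exact ⟨x₀, hx₀, φ, hφ, weaklyConvergesTo_of_tendsto_toWeakSpace hlim⟩

theorem isCompact_toWeakSpace_image_closedBall
    (hX : Function.Surjective (inclusionInDoubleDual 𝕜 X)) (x : X) (r : ℝ) :
    IsCompact (toWeakSpace 𝕜 X '' closedBall x r) := by
  have hsurj : Function.Surjective (inclusionInDoubleDualWeak 𝕜 X) := hX
  have himage : toWeakSpace 𝕜 X '' closedBall x r = inclusionInDoubleDualWeak 𝕜 X ⁻¹'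
      (WeakDual.toStrongDual ⁻¹' closedBall (inclusionInDoubleDual 𝕜 X x) r) := by
    rw [LinearEquiv.image_eq_preimage_symm,
      ← (inclusionInDoubleDualLi (E := X) 𝕜).isometry.preimage_closedBall]
    rfl
  rw [himage]
  exact (isEmbedding_inclusionInDoubleDualWeak 𝕜 X).isCompact_preimage'
    (WeakDual.isCompact_closedBall _ r) (by simp [hsurj.range_eq])

end RCLike

theorem compact_of_weak_null_to_strong_null_general
    {𝕜 X Y Z : Type*} [RCLike 𝕜] [NormedAddCommGroup X] [NormedSpace 𝕜 X]
    [NormedAddCommGroup Y] [NormedSpace 𝕜 Y] [SeminormedAddCommGroup Z] [Module 𝕜 Z]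
    (T : X →ₗ[𝕜] Y →ₗ[𝕜] Z)
    (hT : ∀ (x : ℕ → X) (y : ℕ → Y) (x₀ : X) (y₀ : Y),
      WeaklyConvergesTo (𝕜 := 𝕜) x x₀ → WeaklyConvergesTo (𝕜 := 𝕜) y y₀ →
      (x₀ = 0 ∨ y₀ = 0) → Tendsto (fun n => T (x n) (y n)) atTop (𝓝 0))
    {s : Set X} {t : Set Y} (hs : IsCompact (toWeakSpace 𝕜 X '' s))
    (ht : IsCompact (toWeakSpace 𝕜 Y '' t)) :
    IsCompact (Set.image2 (fun x y => T x y) s t) := by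
  refine IsSeqCompact.isCompact fun z hz => ?_
  choose x hx y hy hxy using hz
  obtain ⟨x₀, hx₀, φ, hφ, hxlim⟩ := exists_weaklyConvergesTo_subseq hs hx
  obtain ⟨y₀, hy₀, ψ, hψ, hylim⟩ := exists_weaklyConvergesTo_subseq ht fun n => hy (φ n)
  refine ⟨T x₀ y₀, Set.mem_image2_of_mem hx₀ hy₀, φ ∘ ψ, hφ.comp hψ, ?_⟩
  simpa only [Function.comp_def, hxy] using
    (hxlim.comp_strictMono hψ).tendsto_bilinear hT hylim

/-- Remark 2.4: to conclude compactness of the continuous bilinear operator `T` on reflexive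
Banach spaces, it suffices to test on pairs of weakly convergent sequences at least one of
which converges weakly to `0`, and conclude strong convergence to `0` of the images. -/
theorem compact_of_weak_null_to_strong_null
    {X Y Z : Type*} [NormedAddCommGroup X] [NormedSpace ℝ X] [CompleteSpace X]
    [NormedAddCommGroup Y] [NormedSpace ℝ Y] [CompleteSpace Y]
    [NormedAddCommGroup Z] [NormedSpace ℝ Z]
    (hX : Function.Surjective (inclusionInDoubleDual ℝ X))
    (hY : Function.Surjective (inclusionInDoubleDual ℝ Y))
    (T : X →L[ℝ] Y →L[ℝ] Z)
    (h : ∀ (x : ℕ → X) (y : ℕ → Y) (x₀ : X) (y₀ : Y),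
      WeaklyConvergesTo (𝕜 := ℝ) x x₀ → WeaklyConvergesTo (𝕜 := ℝ) y y₀ →
      (x₀ = 0 ∨ y₀ = 0) →
      Tendsto (fun n => T (x n) (y n)) atTop (𝓝 (0 : Z))) :
    IsCompactBilinear T := by
  have hballX := isCompact_toWeakSpace_image_closedBall hX 0 1
  have hballY := isCompact_toWeakSpace_image_closedBall hY 0 1
  exact (compact_of_weak_null_to_strong_null_general T.toLinearMap₁₂ h hballX hballY).closure
end

section
/- There exist reflexive Banach spaces X and Y, a normed vector space Z, a compact continuous bilinear operator T : X × Y → Z, and sequences {x_n} ⊂ X converging weakly to 0 and {y_n} ⊂ Y converging weakly to 0 such that the sequence {T(x_n, y_n)} does not converge strongly in Z. -/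
open Filter Topology Metric NormedSpace

/-!
A bounded bilinear form is automatically compact, because bounded sets of scalars are relatively
compact; the inner product of `ℓ²` is therefore compact. By Bessel's inequality every orthonormal
sequence is weakly null, so for an orthonormal sequence `e` both `e n` and `(-1) ^ n • e n` are,
while the inner products `⟪e n, (-1) ^ n • e n⟫ = (-1) ^ n` oscillate.
-/

section BilinearMap

variable {𝕜 E F G : Type*} [NontriviallyNormedField 𝕜]
  [SeminormedAddCommGroup E] [NormedSpace 𝕜 E] [SeminormedAddCommGroup F] [NormedSpace 𝕜 F]
  [SeminormedAddCommGroup G] [NormedSpace 𝕜 G]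

theorem isBounded_image2_bilinear (T : E →L[𝕜] F →L[𝕜] G) {s : Set E} {t : Set F}
    (hs : Bornology.IsBounded s) (ht : Bornology.IsBounded t) :
    Bornology.IsBounded (Set.image2 (fun x y => T x y) s t) := by
  obtain ⟨a, ha⟩ := hs.exists_norm_le
  obtain ⟨b, hb⟩ := ht.exists_norm_le
  refine isBounded_iff_forall_norm_le.2 ⟨‖T‖ * a * b, ?_⟩
  rintro _ ⟨x, hx, y, hy, rfl⟩
  exact T.le_of_opNorm₂_le_of_le le_rfl (ha x hx) (hb y hy)

theorem isCompact_closure_image2_bilinear [ProperSpace G] (T : E →L[𝕜] F →L[𝕜] G) {s : Set E}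
    {t : Set F} (hs : Bornology.IsBounded s) (ht : Bornology.IsBounded t) :
    IsCompact (closure (Set.image2 (fun x y => T x y) s t)) :=
  (isBounded_image2_bilinear T hs ht).isCompact_closure

end BilinearMap

section Hilbert

variable {𝕜 E ι : Type*} [RCLike 𝕜] [NormedAddCommGroup E] [InnerProductSpace 𝕜 E]

variable (𝕜 E) in
theorem surjective_inclusionInDoubleDual_of_hilbert [CompleteSpace E] :
    Function.Surjective (inclusionInDoubleDual 𝕜 E) := by
  intro φ
  -- `w ↦ φ ⟪w, ·⟫` is conjugate-linear, hence the conjugation before applying Fréchet-Riesz.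
  let ψ : StrongDual 𝕜 E := (starL 𝕜 : 𝕜 ≃L⋆[𝕜] 𝕜).toContinuousLinearMap.comp
    (φ.comp (innerSL 𝕜 : E →L⋆[𝕜] StrongDual 𝕜 E))
  refine ⟨(InnerProductSpace.toDual 𝕜 E).symm ψ, ?_⟩
  ext f
  obtain ⟨w, rfl⟩ := (InnerProductSpace.toDual 𝕜 E).surjective f
  rw [dual_def, InnerProductSpace.toDual_apply_apply, ← inner_conj_symm,
    InnerProductSpace.toDual_symm_apply]
  exact star_star (φ (InnerProductSpace.toDual 𝕜 E w))

theorem orthonormal_smul_of_norm_eq_one {v : ι → E} (hv : Orthonormal 𝕜 v) {c : ι → 𝕜}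
    (hc : ∀ i, ‖c i‖ = 1) : Orthonormal 𝕜 fun i => c i • v i := by
  refine ⟨fun i => ?_, fun i j hij => ?_⟩
  · rw [norm_smul, hc, hv.norm_eq_one, one_mul]
  · simp only [inner_smul_left, inner_smul_right, hv.inner_eq_zero hij, mul_zero]

theorem tendsto_inner_orthonormal_cofinite_zero {v : ι → E} (hv : Orthonormal 𝕜 v) (x : E) :
    Tendsto (fun i => inner 𝕜 x (v i)) cofinite (𝓝 0) := by
  have sq_norm_tendsto : Tendsto (fun i => ‖inner 𝕜 (v i) x‖ ^ 2) cofinite (𝓝 0) :=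
    (hv.inner_products_summable x).tendsto_cofinite_zero
  have norm_tendsto : Tendsto (fun i => ‖inner 𝕜 (v i) x‖) cofinite (𝓝 0) := by
    simpa using sq_norm_tendsto.sqrt
  exact tendsto_zero_iff_norm_tendsto_zero.2 (norm_tendsto.congr fun i => norm_inner_symm _ _)

theorem tendsto_dual_orthonormal_cofinite_zero [CompleteSpace E] {v : ι → E}
    (hv : Orthonormal 𝕜 v) (f : StrongDual 𝕜 E) :
    Tendsto (fun i => f (v i)) cofinite (𝓝 0) := by
  simpa using tendsto_inner_orthonormal_cofinite_zero hv ((InnerProductSpace.toDual 𝕜 E).symm f)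

end Hilbert

theorem not_exists_tendsto_pow_of_one_le_norm {K : Type*} [NormedDivisionRing K] {c : K}
    (hc : 1 ≤ ‖c‖) (hc_ne_one : c ≠ 1) :
    ¬ ∃ z : K, Tendsto (fun n : ℕ => c ^ n) atTop (𝓝 z) := by
  rintro ⟨z, hz⟩
  have shifted : Tendsto (fun n : ℕ => c ^ (n + 1)) atTop (𝓝 (c * z)) := by
    simpa only [pow_succ'] using hz.const_mul c
  have mul_eq_self : c * z = z := tendsto_nhds_unique shifted (hz.comp (tendsto_add_atTop_nat 1))
  have one_le_norm : 1 ≤ ‖z‖ :=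
    ge_of_tendsto' hz.norm fun n => by simpa only [norm_pow] using one_le_pow₀ hc
  have z_ne_zero : z ≠ 0 := norm_pos_iff.1 (one_pos.trans_le one_le_norm)
  exact hc_ne_one ((mul_eq_right₀ z_ne_zero).1 mul_eq_self)

/-- Proposition 2.3 (ii): there exist reflexive Banach spaces `X`, `Y`, a normed space `Z`,
a compact continuous bilinear operator `T : X × Y → Z`, and sequences `{x_n}`, `{y_n}`
converging weakly to `0` such that `{T(x_n, y_n)}` does not converge strongly in `Z`. -/
theorem exists_compact_bilinear_not_mapping_weak_null_to_strong_convergent :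
    ∃ (X Y Z : Type) (_ : NormedAddCommGroup X) (_ : NormedSpace ℝ X) (_ : CompleteSpace X)
      (_ : NormedAddCommGroup Y) (_ : NormedSpace ℝ Y) (_ : CompleteSpace Y)
      (_ : NormedAddCommGroup Z) (_ : NormedSpace ℝ Z)
      (T : X →L[ℝ] Y →L[ℝ] Z) (x : ℕ → X) (y : ℕ → Y),
      Function.Surjective (inclusionInDoubleDual ℝ X) ∧
      Function.Surjective (inclusionInDoubleDual ℝ Y) ∧
      IsCompact (closure (Set.image2 (fun x y => T x y)
        (closedBall (0 : X) 1) (closedBall (0 : Y) 1))) ∧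
      (∀ f : X →L[ℝ] ℝ, Tendsto (fun n => f (x n)) atTop (𝓝 0)) ∧
      (∀ g : Y →L[ℝ] ℝ, Tendsto (fun n => g (y n)) atTop (𝓝 0)) ∧
      ¬ ∃ z : Z, Tendsto (fun n => T (x n) (y n)) atTop (𝓝 z) := by
  let ℓ₂ := lp (fun _ : ℕ => ℝ) 2
  let e : HilbertBasis ℕ ℝ ℓ₂ := .ofRepr (.refl ℝ ℓ₂)
  have he : Orthonormal ℝ e := e.orthonormal
  have he_alt : Orthonormal ℝ fun n => (-1 : ℝ) ^ n • e n :=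
    orthonormal_smul_of_norm_eq_one he fun n => by simp
  have inner_alt : ∀ n, innerSL ℝ (e n) ((-1 : ℝ) ^ n • e n) = (-1 : ℝ) ^ n := fun n => by
    rw [innerSL_apply_apply, inner_smul_right, inner_self_eq_one_of_norm_eq_one (he.norm_eq_one n),
      mul_one]
  refine ⟨ℓ₂, ℓ₂, ℝ, inferInstance, inferInstance, inferInstance, inferInstance, inferInstance,
    inferInstance, inferInstance, inferInstance, innerSL ℝ, e, fun n => (-1 : ℝ) ^ n • e n,
    surjective_inclusionInDoubleDual_of_hilbert ℝ ℓ₂,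
    surjective_inclusionInDoubleDual_of_hilbert ℝ ℓ₂,
    isCompact_closure_image2_bilinear _ isBounded_closedBall isBounded_closedBall, ?_, ?_, ?_⟩
  · simpa only [Nat.cofinite_eq_atTop] using tendsto_dual_orthonormal_cofinite_zero he
  · simpa only [Nat.cofinite_eq_atTop] using tendsto_dual_orthonormal_cofinite_zero he_alt
  · simpa only [inner_alt] using
      not_exists_tendsto_pow_of_one_le_norm (c := (-1 : ℝ)) (by simp) (by norm_num)
end
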